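/- arXiv:2107.00006 — 2 statements merged into one kernel-verified Lean document; each statement's English description precedes it below -/
import Mathlib

section
/- Let (Y_r)_{r∈ℝ₊} be an integrable submartingale with sup_{r∈ℝ₊} E[|Y_r|] < ∞. Then there exist a nonnegative martingale (U_r)_{r∈ℝ₊} and a nonnegative supermartingale (W_r)_{r∈ℝ₊}, both with uniformly bounded L¹ norms, such that Y_r = U_r − W_r for all r (Krickeberg decomposition). -/
open MeasureTheory Filter

/-!
For a submartingale `X` and a fixed time `r`, the conditional expectations `μ[X t | ℱ r]`, `t ≥ r`,
increase with `t`. If the means of `X` are bounded above they are Cauchy in `L¹`, because the `L¹`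
distance of two comparable functions is the difference of their integrals. Continuity of the
conditional expectation in `L¹` turns the tower property into the martingale property of the limits,
so these form a martingale above `X`. Applied to the positive part of `Y`, this yields a martingale
`U` with `0 ≤ Y⁺ ≤ U`, and `W = U - Y` is a nonnegative supermartingale.
-/

section L1

open scoped Topology

variable {α : Type*} {m0 : MeasurableSpace α} {μ : Measure α}

lemma L1_norm_sub_eq_integral_sub_of_le {f g : α →₁[μ] ℝ} (hfg : f ≤ g) :
    ‖g - f‖ = ∫ a, g a ∂μ - ∫ a, f a ∂μ := by
  have hnorm : ∀ᵐ a ∂μ, ‖(g - f) a‖ = g a - f a := by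
    filter_upwards [Lp.coeFn_sub g f, (Lp.coeFn_le f g).2 hfg] with a hsub hle
    rw [hsub, Pi.sub_apply, Real.norm_of_nonneg (sub_nonneg.2 hle)]
  rw [L1.norm_eq_integral_norm, integral_congr_ae hnorm,
    integral_sub (L1.integrable_coeFn g) (L1.integrable_coeFn f)]

lemma exists_tendsto_L1_of_monotoneOn_Ici {ι : Type*} [Preorder ι] [IsDirectedOrder ι] {i₀ : ι}
    {f : ι → α →₁[μ] ℝ} (hf : MonotoneOn f (Set.Ici i₀))
    (hbdd : BddAbove ((fun i => ∫ a, f i a ∂μ) '' Set.Ici i₀)) :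
    ∃ g, Tendsto f atTop (𝓝 g) := by
  have : Nonempty ι := ⟨i₀⟩
  refine cauchy_map_iff_exists_tendsto.1 (Metric.cauchy_iff.2 ⟨inferInstance, fun ε hε => ?_⟩)
  obtain ⟨_, ⟨i, hi, rfl⟩, hlt⟩ := exists_lt_of_lt_csSup (Set.nonempty_Ici.image _)
    (sub_lt_self (sSup ((fun i => ∫ a, f i a ∂μ) '' Set.Ici i₀)) (half_pos hε))
  have hdist : ∀ j ≥ i, dist (f j) (f i) < ε / 2 := fun j hij => by
    have hj : i₀ ≤ j := le_trans hi hij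
    rw [dist_eq_norm, L1_norm_sub_eq_integral_sub_of_le (hf hi hj hij)]
    linarith [le_csSup hbdd (Set.mem_image_of_mem _ hj)]
  refine ⟨f '' Set.Ici i, image_mem_map (Ici_mem_atTop i), ?_⟩
  rintro _ ⟨j, hj, rfl⟩ _ ⟨k, hk, rfl⟩
  calc dist (f j) (f k) ≤ dist (f j) (f i) + dist (f k) (f i) := dist_triangle_right _ _ _
    _ < ε / 2 + ε / 2 := add_lt_add (hdist j hj) (hdist k hk)
    _ = ε := add_halves ε

end L1

section CondExp

variable {α E : Type*} [NormedAddCommGroup E] [NormedSpace ℝ E] [CompleteSpace E]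
  {m m₁ m₂ m0 : MeasurableSpace α} {μ : Measure α}

lemma condExp_coe_ae_eq_condExpL1CLM (hm : m ≤ m0) [SigmaFinite (μ.trim hm)] (f : α →₁[μ] E) :
    μ[f | m] =ᵐ[μ] condExpL1CLM E hm μ f := by
  simpa only [Integrable.toL1_coeFn] using condExp_ae_eq_condExpL1CLM hm (L1.integrable_coeFn f)

lemma condExpL1CLM_condExpL1CLM_of_le (hm₁₂ : m₁ ≤ m₂) (hm₂ : m₂ ≤ m0)
    [SigmaFinite (μ.trim hm₂)] [SigmaFinite (μ.trim (hm₁₂.trans hm₂))] (f : α →₁[μ] E) :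
    condExpL1CLM E (hm₁₂.trans hm₂) μ (condExpL1CLM E hm₂ μ f) =
      condExpL1CLM E (hm₁₂.trans hm₂) μ f := by
  refine Lp.ext ?_
  calc condExpL1CLM E (hm₁₂.trans hm₂) μ (condExpL1CLM E hm₂ μ f)
      =ᵐ[μ] μ[condExpL1CLM E hm₂ μ f | m₁] := (condExp_coe_ae_eq_condExpL1CLM _ _).symm
    _ =ᵐ[μ] μ[μ[f | m₂] | m₁] := condExp_congr_ae (condExp_coe_ae_eq_condExpL1CLM hm₂ f).symm
    _ =ᵐ[μ] μ[f | m₁] := condExp_condExp_of_le hm₁₂ hm₂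
    _ =ᵐ[μ] condExpL1CLM E (hm₁₂.trans hm₂) μ f := condExp_coe_ae_eq_condExpL1CLM _ _

lemma integral_condExpL1CLM (hm : m ≤ m0) [SigmaFinite (μ.trim hm)] (f : α →₁[μ] E) :
    ∫ a, condExpL1CLM E hm μ f a ∂μ = ∫ a, f a ∂μ := by
  rw [← integral_congr_ae (condExp_coe_ae_eq_condExpL1CLM hm f), integral_condExp hm]

end CondExp

section Martingale

open scoped Topology

variable {Ω ι E : Type*} [Preorder ι] [NormedAddCommGroup E] [NormedSpace ℝ E] [CompleteSpace E]
  {m0 : MeasurableSpace Ω} {μ : Measure Ω} {ℱ : Filtration ι m0} [SigmaFiniteFiltration μ ℱ]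

lemma exists_martingale_ae_eq_of_condExpL1CLM_eq {L : ι → Ω →₁[μ] E}
    (hL : ∀ r s, r ≤ s → condExpL1CLM E (ℱ.le r) μ (L s) = L r) :
    ∃ U : ι → Ω → E, Martingale U ℱ μ ∧ ∀ r, U r =ᵐ[μ] L r := by
  have hcond : ∀ r s, r ≤ s → μ[L s | ℱ r] =ᵐ[μ] L r := fun r s hrs => by
    simpa only [hL r s hrs] using condExp_coe_ae_eq_condExpL1CLM (ℱ.le r) (L s)
  refine ⟨fun r => μ[L r | ℱ r], ⟨fun r => stronglyMeasurable_condExp, fun r s hrs => ?_⟩,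
    fun r => hcond r r le_rfl⟩
  calc μ[μ[L s | ℱ s] | ℱ r]
      =ᵐ[μ] μ[L s | ℱ r] := condExp_condExp_of_le (ℱ.mono hrs) (ℱ.le s)
    _ =ᵐ[μ] L r := hcond r s hrs
    _ =ᵐ[μ] μ[L r | ℱ r] := (hcond r r le_rfl).symm

lemma condExpL1CLM_eq_of_tendsto [IsDirectedOrder ι] {x L : ι → Ω →₁[μ] E}
    (hL : ∀ r, Tendsto (fun t => condExpL1CLM E (ℱ.le r) μ (x t)) atTop (𝓝 (L r)))
    {r s : ι} (hrs : r ≤ s) : condExpL1CLM E (ℱ.le r) μ (L s) = L r := by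
  have : Nonempty ι := ⟨r⟩
  refine tendsto_nhds_unique (((condExpL1CLM E (ℱ.le r) μ).continuous.tendsto _).comp (hL s)) ?_
  simpa only [Function.comp_def, condExpL1CLM_condExpL1CLM_of_le (ℱ.mono hrs) (ℱ.le s)] using hL r

variable {X : ι → Ω → ℝ}

lemma monotoneOn_condExpL1CLM_toL1_of_submartingale (hX : Submartingale X ℱ μ) (r : ι) :
    MonotoneOn (fun t => condExpL1CLM ℝ (ℱ.le r) μ ((hX.integrable t).toL1 (X t)))
      (Set.Ici r) := by
  intro s hs t _ hst
  refine (Lp.coeFn_le _ _).1 ?_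
  calc condExpL1CLM ℝ (ℱ.le r) μ ((hX.integrable s).toL1 (X s))
      =ᵐ[μ] μ[X s | ℱ r] := (condExp_ae_eq_condExpL1CLM _ _).symm
    _ ≤ᵐ[μ] μ[μ[X t | ℱ s] | ℱ r] :=
      condExp_mono (hX.integrable s) integrable_condExp (hX.ae_le_condExp hst)
    _ =ᵐ[μ] μ[X t | ℱ r] := condExp_condExp_of_le (ℱ.mono hs) (ℱ.le s)
    _ =ᵐ[μ] condExpL1CLM ℝ (ℱ.le r) μ ((hX.integrable t).toL1 (X t)) :=
      condExp_ae_eq_condExpL1CLM _ _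

lemma exists_martingale_ge_of_submartingale [IsDirectedOrder ι] (hX : Submartingale X ℱ μ) {C : ℝ}
    (hC : ∀ t, ∫ ω, X t ω ∂μ ≤ C) :
    ∃ U : ι → Ω → ℝ, Martingale U ℱ μ ∧ (∀ r, X r ≤ᵐ[μ] U r) ∧ ∀ r, ∫ ω, U r ω ∂μ ≤ C := by
  set x : ι → Ω →₁[μ] ℝ := fun t => (hX.integrable t).toL1 (X t)
  have hmean : ∀ r t, ∫ ω, condExpL1CLM ℝ (ℱ.le r) μ (x t) ω ∂μ ≤ C := fun r t => by
    rw [integral_condExpL1CLM, integral_congr_ae (hX.integrable t).coeFn_toL1]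
    exact hC t
  have hmono := monotoneOn_condExpL1CLM_toL1_of_submartingale hX
  choose L hL using fun r => exists_tendsto_L1_of_monotoneOn_Ici (hmono r)
    ⟨C, Set.forall_mem_image.2 fun t _ => hmean r t⟩
  obtain ⟨U, hU, hUL⟩ := exists_martingale_ae_eq_of_condExpL1CLM_eq
    fun r s hrs => condExpL1CLM_eq_of_tendsto hL hrs
  refine ⟨U, hU, fun r => ?_, fun r => ?_⟩ <;> have : Nonempty ι := ⟨r⟩
  · have hle : condExpL1CLM ℝ (ℱ.le r) μ (x r) ≤ L r :=
      ge_of_tendsto (hL r) ((eventually_ge_atTop r).mono fun t hrt => hmono r le_rfl hrt hrt)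
    calc X r ≤ᵐ[μ] μ[X r | ℱ r] := hX.ae_le_condExp le_rfl
      _ =ᵐ[μ] condExpL1CLM ℝ (ℱ.le r) μ (x r) := condExp_ae_eq_condExpL1CLM _ _
      _ ≤ᵐ[μ] L r := (Lp.coeFn_le _ _).2 hle
      _ =ᵐ[μ] U r := (hUL r).symm
  · rw [integral_congr_ae (hUL r)]
    exact le_of_tendsto' ((continuous_integral.tendsto _).comp (hL r)) (hmean r)

theorem krickeberg_decomposition_general [IsDirectedOrder ι] {Y : ι → Ω → ℝ}
    (hY : Submartingale Y ℱ μ) {C : ℝ} (hC : ∀ r, ∫ ω, |Y r ω| ∂μ ≤ C) :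
    ∃ U W : ι → Ω → ℝ, Martingale U ℱ μ ∧ Supermartingale W ℱ μ ∧
      (∀ r, 0 ≤ᵐ[μ] U r) ∧ (∀ r, 0 ≤ᵐ[μ] W r) ∧
      (∀ r, ∫ ω, |U r ω| ∂μ ≤ C) ∧ (∀ r, ∫ ω, |W r ω| ∂μ ≤ 2 * C) ∧ Y = U - W := by
  have hpos_mean : ∀ r, ∫ ω, Y⁺ r ω ∂μ ≤ C := fun r =>
    (integral_mono (hY.pos.integrable r) (hY.integrable r).abs
      fun ω => sup_le (le_abs_self _) (abs_nonneg _)).trans (hC r)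
  obtain ⟨U, hU, hYU, hUC⟩ := exists_martingale_ge_of_submartingale hY.pos hpos_mean
  have hU_nonneg : ∀ r, 0 ≤ᵐ[μ] U r := fun r =>
    (hYU r).mono fun ω => (posPart_nonneg (Y r ω)).trans
  have hU_L1 : ∀ r, ∫ ω, |U r ω| ∂μ ≤ C := fun r =>
    (integral_congr_ae ((hU_nonneg r).mono fun ω => abs_of_nonneg)).trans_le (hUC r)
  refine ⟨U, U - Y, hU, hU.supermartingale.sub_submartingale hY, hU_nonneg,
    fun r => (hYU r).mono fun ω h => sub_nonneg.2 ((le_posPart (Y r ω)).trans h), hU_L1,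
    fun r => ?_, (sub_sub_cancel U Y).symm⟩
  have hUr := (hU.integrable r).abs
  have hYr := (hY.integrable r).abs
  calc ∫ ω, |(U - Y) r ω| ∂μ
      ≤ ∫ ω, (|U r ω| + |Y r ω|) ∂μ :=
        integral_mono ((hU.integrable r).sub (hY.integrable r)).abs (hUr.add hYr)
          fun ω => abs_sub _ _
    _ = ∫ ω, |U r ω| ∂μ + ∫ ω, |Y r ω| ∂μ := integral_add hUr hYr
    _ ≤ 2 * C := (add_le_add (hU_L1 r) (hC r)).trans_eq (two_mul C).symm

end Martingale

/-- Krickeberg decomposition: an L¹-bounded submartingale is the difference of a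
nonnegative martingale and a nonnegative supermartingale, both L¹-bounded. -/
theorem krickeberg_decomposition
    {Ω : Type*} {m0 : MeasurableSpace Ω} {μ : Measure Ω} [IsProbabilityMeasure μ]
    (ℱ : Filtration NNReal m0) (Y : NNReal → Ω → ℝ) (hY : Submartingale Y ℱ μ)
    (hbdd : ∃ C : ℝ, ∀ r : NNReal, ∫ ω, |Y r ω| ∂μ ≤ C) :
    ∃ (U W : NNReal → Ω → ℝ),
      Martingale U ℱ μ ∧ Supermartingale W ℱ μ ∧
      (∀ r, 0 ≤ᵐ[μ] U r) ∧ (∀ r, 0 ≤ᵐ[μ] W r) ∧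
      (∃ C : ℝ, ∀ r, ∫ ω, |U r ω| ∂μ ≤ C) ∧
      (∃ C : ℝ, ∀ r, ∫ ω, |W r ω| ∂μ ≤ C) ∧
      ∀ r, Y r =ᵐ[μ] fun ω => U r ω - W r ω := by
  obtain ⟨C, hC⟩ := hbdd
  obtain ⟨U, W, hU, hW, hU0, hW0, hUC, hWC, rfl⟩ := krickeberg_decomposition_general hY hC
  exact ⟨U, W, hU, hW, hU0, hW0, ⟨C, hUC⟩, ⟨2 * C, hWC⟩, fun _ => EventuallyEq.rfl⟩
end

section
/- Let u ∈ ℝ, let D be a countable dense subset of ℝ, and let (Y_r)_{r∈ℝ} be an integrable submartingale. Then there exist integrable random variables V and V' such that Y_r → V a.s. as r ↓ u along D, Y_r → V' a.s. as r ↑ u along D, with E[V | F_u] ≥ Y_u a.s. and E[Y_u | F_{u−}] ≥ V' a.s. -/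
open MeasureTheory Filter

/-! Upcrossings along a countable index set are exhausted by upcrossings along finite subsets, to
which Doob's discrete upcrossing inequality applies with a bound that does not see the subset. Hence
an L¹-bounded submartingale over a countable linear order converges almost surely at both ends, and
the one-sided limits at `u` are such ends, of `D ∩ [c, u)` and of `D ∩ (u, v]`.

On the left, `Y r ≤ E[Y u | ℱ r]` and Lévy's upward theorem give the inequality for `V'`. On the
right, `Y r ≤ E[Y v | ℱ r]` is dominated by a uniformly integrable family; this makes `(Y r - V)⁺`
tend to `0` in L¹, which suffices to let `r ↓ u` in `Y u ≤ E[Y r | ℱ u]`. -/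

open Set
open scoped Topology ENNReal NNReal

section Upcrossings

variable {ι : Type*} [LinearOrder ι] {y : ι → ℝ} {a b : ℝ}

/-- `HasUpcrossings y a b S k t` says that `y` goes from below `a` to above `b` at least `k`
successive times at indices in `S` that are at most `t`. Weak inequalities between the indices
suffice for `a ≤ b`, since `y` takes different values at consecutive ones. -/
def HasUpcrossings (y : ι → ℝ) (a b : ℝ) (S : Set ι) : ℕ → ι → Prop
  | 0, _ => True
  | k + 1, t => ∃ r ∈ S, ∃ s ∈ S, r ≤ s ∧ s ≤ t ∧ y r < a ∧ b < y s ∧ HasUpcrossings y a b S k r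

lemma HasUpcrossings.mono {S T : Set ι} (hST : S ⊆ T) :
    ∀ {k : ℕ} {t : ι}, HasUpcrossings y a b S k t → HasUpcrossings y a b T k t
  | 0, _, _ => trivial
  | _ + 1, _, ⟨r, hr, s, hs, hrs, hst, hra, hbs, hbefore⟩ =>
    ⟨r, hST hr, s, hST hs, hrs, hst, hra, hbs, hbefore.mono hST⟩

lemma HasUpcrossings.exists_finset {S : Set ι} :
    ∀ {k : ℕ} {t : ι}, HasUpcrossings y a b S k t →
      ∃ F : Finset ι, ↑F ⊆ S ∧ HasUpcrossings y a b F k t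
  | 0, _, _ => ⟨∅, by simp, trivial⟩
  | _ + 1, _, ⟨r, hr, s, hs, hrs, hst, hra, hbs, hbefore⟩ => by
    obtain ⟨F, hFS, hF⟩ := hbefore.exists_finset
    refine ⟨insert r (insert s F), ?_, r, by simp, s, by simp, hrs, hst, hra, hbs,
      hF.mono fun x hx => by simp [Finset.mem_coe.1 hx]⟩
    simp only [Finset.coe_insert, insert_subset_iff]
    exact ⟨hr, hs, hFS⟩

lemma eventually_hasUpcrossings_atTop (ha : ∃ᶠ t in atTop, y t < a)
    (hb : ∃ᶠ t in atTop, b < y t) : ∀ k, ∀ᶠ t in atTop, HasUpcrossings y a b univ k t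
  | 0 => Eventually.of_forall fun _ => trivial
  | k + 1 => by
    obtain ⟨r, hra, hbefore⟩ := (ha.and_eventually (eventually_hasUpcrossings_atTop ha hb k)).exists
    have : Nonempty ι := ⟨r⟩
    obtain ⟨s, hrs, hbs⟩ := frequently_atTop.1 hb r
    filter_upwards [eventually_ge_atTop s] with t hst
    exact ⟨r, mem_univ r, s, mem_univ s, hrs, hst, hra, hbs, hbefore⟩

lemma hasUpcrossings_of_frequently_atBot (ha : ∃ᶠ t in atBot, y t < a)
    (hb : ∃ᶠ t in atBot, b < y t) : ∀ k t, HasUpcrossings y a b univ k t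
  | 0, _ => trivial
  | k + 1, t => by
    have : Nonempty ι := ⟨t⟩
    obtain ⟨s, hst, hbs⟩ := frequently_atBot.1 hb t
    obtain ⟨r, hrs, hra⟩ := frequently_atBot.1 ha s
    exact ⟨r, mem_univ r, s, mem_univ s, hrs, hst, hra, hbs,
      hasUpcrossings_of_frequently_atBot ha hb k r⟩

/-- The last clause puts every later index at which the process is below `a` beyond `M`, so that the
next upcrossing is not counted before `M`. -/
lemma HasUpcrossings.exists_le_upcrossingsBefore {Ω : Type*} {Y : ι → Ω → ℝ} {ω : Ω} (hab : a < b)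
    {τ : ℕ → ι} (hτ : Monotone τ) {S : Set ι} (hS : S ⊆ range τ) :
    ∀ {k : ℕ} {t : ι}, HasUpcrossings (Y · ω) a b S k t →
      ∃ M, k ≤ upcrossingsBefore a b (fun n => Y (τ n)) M ω ∧
        ∀ n, t ≤ τ n → Y (τ n) ω < a → M ≤ n
  | 0, _, _ => ⟨0, Nat.zero_le _, fun _ _ _ => Nat.zero_le _⟩
  | k + 1, t, ⟨r, hr, s, hs, hrs, hst, hra, hbs, hbefore⟩ => by
    obtain ⟨M, hkM, hM⟩ := hbefore.exists_le_upcrossingsBefore hab hτ hS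
    obtain ⟨i, rfl⟩ := hS hr
    obtain ⟨j, rfl⟩ := hS hs
    have ne_of_low {n : ℕ} (hn : Y (τ n) ω < a) : τ n ≠ τ j := fun h =>
      (hn.trans hab).not_gt (h ▸ hbs)
    have hij : i ≤ j := (hτ.reflect_lt (hrs.lt_of_ne (ne_of_low hra))).le
    refine ⟨j + 1, Nat.succ_le_of_lt (hkM.trans_lt ?_), fun n htn hn =>
      hτ.reflect_lt ((hst.trans htn).lt_of_ne (ne_of_low hn).symm)⟩
    exact upcrossingsBefore_lt_of_exists_upcrossing hab (hM i le_rfl hra) hra hij hbs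

lemma HasUpcrossings.le_upcrossings {Ω : Type*} {Y : ι → Ω → ℝ} {ω : Ω} (hab : a < b)
    {τ : ℕ → ι} (hτ : Monotone τ) {S : Set ι} (hS : S ⊆ range τ) {k : ℕ} {t : ι}
    (h : HasUpcrossings (Y · ω) a b S k t) : k ≤ upcrossings a b (fun n => Y (τ n)) ω := by
  obtain ⟨M, hkM, -⟩ := h.exists_le_upcrossingsBefore hab hτ hS
  exact (Nat.cast_le.2 hkM).trans
    (le_iSup (fun N => (upcrossingsBefore a b (fun n => Y (τ n)) N ω : ℝ≥0∞)) M)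

end Upcrossings

lemma exists_tendsto_of_not_frequently_crossing {α : Type*} {l : Filter α} {y : α → ℝ} {B : ℝ}
    (hB : ∃ᶠ t in l, |y t| < B)
    (hy : ∀ a b : ℚ, a < b → ¬((∃ᶠ t in l, y t < a) ∧ ∃ᶠ t in l, b < y t)) :
    ∃ x, Tendsto y l (𝓝 x) := by
  obtain ⟨q, hq⟩ := exists_rat_gt B
  have hlow : ∃ᶠ t in l, y t < q := hB.mono fun t ht => (abs_lt.1 ht).2.trans hq
  have hhigh : ∃ᶠ t in l, ((-q : ℚ) : ℝ) < y t := hB.mono fun t ht => by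
    push_cast
    linarith [(abs_lt.1 ht).1]
  have hle : ∀ᶠ t in l, y t ≤ ((q + 1 : ℚ) : ℝ) := by
    have h : ¬∃ᶠ t in l, ((q + 1 : ℚ) : ℝ) < y t := fun h => hy _ _ (lt_add_one q) ⟨hlow, h⟩
    simpa only [not_frequently, not_lt] using h
  have hge : ∀ᶠ t in l, ((-q - 1 : ℚ) : ℝ) ≤ y t := by
    have h : ¬∃ᶠ t in l, y t < ((-q - 1 : ℚ) : ℝ) := fun h => hy _ _ (sub_one_lt (-q)) ⟨h, hhigh⟩
    simpa only [not_frequently, not_lt] using h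
  refine tendsto_of_no_upcrossings Rat.denseRange_cast ?_
    (isBoundedUnder_of_eventually_le hle) (isBoundedUnder_of_eventually_ge hge)
  rintro _ ⟨a, rfl⟩ _ ⟨b, rfl⟩ hab
  exact hy a b (Rat.cast_lt.1 hab)

lemma exists_monotone_nat_subset_range {ι : Type*} [LinearOrder ι] [Nonempty ι] (F : Finset ι) :
    ∃ τ : ℕ → ι, Monotone τ ∧ ↑F ⊆ range τ := by
  obtain rfl | hF := F.eq_empty_or_nonempty
  · exact ⟨fun _ => Classical.arbitrary ι, monotone_const, by simp⟩
  have hcard : F.card - 1 < F.card := Nat.sub_lt hF.card_pos one_pos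
  refine ⟨fun n => F.orderEmbOfFin rfl ⟨min n (F.card - 1), (min_le_right _ _).trans_lt hcard⟩,
    fun m n hmn => (F.orderEmbOfFin rfl).monotone (min_le_min_right _ hmn), ?_⟩
  rw [← F.range_orderEmbOfFin rfl]
  rintro _ ⟨i, rfl⟩
  exact ⟨i, by simp only [min_eq_left (Nat.le_sub_one_of_lt i.isLt)]⟩

section Convergence

variable {Ω ι : Type*} {m0 : MeasurableSpace Ω} {μ : Measure Ω}

/-- The filtration `ℱ` along a monotone family of indices, such as a sequence or a subset. -/
def sampledFiltration {κ : Type*} [Preorder ι] [Preorder κ] (ℱ : Filtration ι m0) {φ : κ → ι}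
    (hφ : Monotone φ) : Filtration κ m0 where
  seq k := ℱ (φ k)
  mono' _ _ h := ℱ.mono (hφ h)
  le' k := ℱ.le (φ k)

lemma submartingale_comp_monotone {κ : Type*} [Preorder ι] [Preorder κ] {ℱ : Filtration ι m0}
    {Y : ι → Ω → ℝ} (hY : Submartingale Y ℱ μ) {φ : κ → ι} (hφ : Monotone φ) :
    Submartingale (fun k => Y (φ k)) (sampledFiltration ℱ hφ) μ :=
  ⟨fun k => hY.stronglyMeasurable (φ k), fun _ _ h => hY.ae_le_condExp (hφ h),
    fun k => hY.integrable (φ k)⟩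

lemma lintegral_posPart_sub_le {f : Ω → ℝ} {R : ℝ≥0∞} (hf : eLpNorm f 1 μ ≤ R) (a : ℝ) :
    ∫⁻ ω, ENNReal.ofReal (f ω - a)⁺ ∂μ ≤ R + ‖a‖ₑ * μ univ :=
  calc ∫⁻ ω, ENNReal.ofReal (f ω - a)⁺ ∂μ
      ≤ ∫⁻ ω, (‖f ω‖ₑ + ‖a‖ₑ) ∂μ := lintegral_mono fun ω => by
        rw [posPart_def, ENNReal.ofReal_max, ENNReal.ofReal_zero, max_eq_left zero_le]
        exact (Real.ofReal_le_enorm _).trans enorm_sub_le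
    _ = eLpNorm f 1 μ + ‖a‖ₑ * μ univ := by
        rw [lintegral_add_right _ measurable_const, lintegral_const, eLpNorm_one_eq_lintegral_enorm]
    _ ≤ R + ‖a‖ₑ * μ univ := by gcongr

variable [IsFiniteMeasure μ] [LinearOrder ι] {ℱ : Filtration ι m0} {Y : ι → Ω → ℝ} {R : ℝ≥0}

lemma mul_measure_hasUpcrossings_finset_le [Nonempty ι] (hY : Submartingale Y ℱ μ)
    (hbdd : ∀ t, eLpNorm (Y t) 1 μ ≤ R) {a b : ℝ} (hab : a < b) (F : Finset ι) (k : ℕ) :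
    ENNReal.ofReal (b - a) * (k * μ {ω | ∃ t, HasUpcrossings (Y · ω) a b F k t}) ≤
      R + ‖a‖ₑ * μ univ := by
  obtain ⟨τ, hτ, hF⟩ := exists_monotone_nat_subset_range F
  have hYτ := submartingale_comp_monotone hY hτ
  calc ENNReal.ofReal (b - a) * (k * μ {ω | ∃ t, HasUpcrossings (Y · ω) a b F k t})
      ≤ ENNReal.ofReal (b - a) * (k * μ {ω | k ≤ upcrossings a b (fun n => Y (τ n)) ω}) := by
        gcongr
        rintro ⟨t, ht⟩
        exact ht.le_upcrossings hab hτ hF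
    _ ≤ ENNReal.ofReal (b - a) * ∫⁻ ω, upcrossings a b (fun n => Y (τ n)) ω ∂μ := by
        gcongr
        exact mul_meas_ge_le_lintegral₀
          (hYτ.stronglyAdapted.measurable_upcrossings hab).aemeasurable k
    _ ≤ ⨆ n, ∫⁻ ω, ENNReal.ofReal (Y (τ n) ω - a)⁺ ∂μ :=
        hYτ.mul_lintegral_upcrossings_le_lintegral_pos_part a b
    _ ≤ R + ‖a‖ₑ * μ univ := iSup_le fun n => lintegral_posPart_sub_le (hbdd (τ n)) a

lemma mul_measure_hasUpcrossings_le [Nonempty ι] [Countable ι] (hY : Submartingale Y ℱ μ)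
    (hbdd : ∀ t, eLpNorm (Y t) 1 μ ≤ R) {a b : ℝ} (hab : a < b) (k : ℕ) :
    ENNReal.ofReal (b - a) * (k * μ {ω | ∃ t, HasUpcrossings (Y · ω) a b univ k t}) ≤
      R + ‖a‖ₑ * μ univ := by
  let A (F : Finset ι) : Set Ω := {ω | ∃ t, HasUpcrossings (Y · ω) a b F k t}
  have hA : Monotone A := fun F G hFG ω ⟨t, ht⟩ => ⟨t, ht.mono (Finset.coe_subset.2 hFG)⟩
  have hexhaust : {ω | ∃ t, HasUpcrossings (Y · ω) a b univ k t} ⊆ ⋃ F, A F := by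
    rintro ω ⟨t, ht⟩
    obtain ⟨F, -, hF⟩ := ht.exists_finset
    exact mem_iUnion.2 ⟨F, t, hF⟩
  calc ENNReal.ofReal (b - a) * (k * μ {ω | ∃ t, HasUpcrossings (Y · ω) a b univ k t})
      ≤ ENNReal.ofReal (b - a) * (k * μ (⋃ F, A F)) := by gcongr
    _ = ⨆ F, ENNReal.ofReal (b - a) * (k * μ (A F)) := by
        simp only [hA.measure_iUnion, ENNReal.mul_iSup]
    _ ≤ R + ‖a‖ₑ * μ univ :=
        iSup_le fun F => mul_measure_hasUpcrossings_finset_le hY hbdd hab F k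

lemma ae_exists_not_hasUpcrossings [Nonempty ι] [Countable ι] (hY : Submartingale Y ℱ μ)
    (hbdd : ∀ t, eLpNorm (Y t) 1 μ ≤ R) {a b : ℝ} (hab : a < b) :
    ∀ᵐ ω ∂μ, ∃ k, ∀ t, ¬HasUpcrossings (Y · ω) a b univ k t := by
  have hba : ENNReal.ofReal (b - a) ≠ 0 := (ENNReal.ofReal_pos.2 (sub_pos.2 hab)).ne'
  have hfin : R + ‖a‖ₑ * μ univ ≠ ∞ := by finiteness
  rw [ae_iff]
  by_contra hpos
  obtain ⟨k, hk⟩ := ENNReal.exists_nat_mul_gt (mul_ne_zero hba hpos) hfin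
  refine (mul_measure_hasUpcrossings_le hY hbdd hab k).not_gt (hk.trans_le ?_)
  rw [mul_left_comm]
  gcongr
  intro hω
  push Not at hω
  exact hω k

lemma ae_exists_tendsto_of_hasUpcrossings [Nonempty ι] [Countable ι] (hY : Submartingale Y ℱ μ)
    (hbdd : ∀ t, eLpNorm (Y t) 1 μ ≤ R) (l : Filter ι) [l.NeBot] [l.IsCountablyGenerated]
    (hl : ∀ (y : ι → ℝ) (a b : ℝ), (∃ᶠ t in l, y t < a) → (∃ᶠ t in l, b < y t) →
      ∀ k, ∃ t, HasUpcrossings y a b univ k t) :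
    ∀ᵐ ω ∂μ, ∃ x, Tendsto (Y · ω) l (𝓝 x) := by
  obtain ⟨σ, hσ⟩ := l.exists_seq_tendsto
  have hliminf := ae_bdd_liminf_atTop_of_eLpNorm_bdd one_ne_zero
    (fun n => ((hY.stronglyMeasurable (σ n)).mono (ℱ.le _)).measurable) fun n => hbdd (σ n)
  have hcross : ∀ᵐ ω ∂μ, ∀ a b : ℚ, a < b → ∃ k, ∀ t, ¬HasUpcrossings (Y · ω) a b univ k t := by
    simp only [ae_all_iff, eventually_imp_distrib_left]
    exact fun a b hab => ae_exists_not_hasUpcrossings hY hbdd (Rat.cast_lt.2 hab)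
  filter_upwards [hliminf, hcross] with ω hω hωcross
  obtain ⟨B, hωB, -⟩ := ENNReal.lt_iff_exists_nnreal_btwn.1 hω
  have hB : ∃ᶠ n in atTop, |Y (σ n) ω| < B :=
    (frequently_lt_of_liminf_lt (by isBoundedDefault) hωB).mono fun n hn => by
      simpa [enorm_eq_nnnorm, ← NNReal.coe_lt_coe] using hn
  refine exists_tendsto_of_not_frequently_crossing (hσ.frequently hB) fun a b hab ⟨ha, hb⟩ => ?_
  obtain ⟨k, hk⟩ := hωcross a b hab
  obtain ⟨t, ht⟩ := hl _ a b ha hb k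
  exact hk t ht

lemma exists_integrable_tendsto_of_hasUpcrossings [Nonempty ι] [Countable ι]
    (hY : Submartingale Y ℱ μ) (hbdd : ∀ t, eLpNorm (Y t) 1 μ ≤ R) (l : Filter ι) [l.NeBot]
    [l.IsCountablyGenerated]
    (hl : ∀ (y : ι → ℝ) (a b : ℝ), (∃ᶠ t in l, y t < a) → (∃ᶠ t in l, b < y t) →
      ∀ k, ∃ t, HasUpcrossings y a b univ k t) :
    ∃ V : Ω → ℝ, Integrable V μ ∧ ∀ᵐ ω ∂μ, Tendsto (Y · ω) l (𝓝 (V ω)) := by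
  obtain ⟨V, hV, hlim⟩ := measurable_limit_of_tendsto_metrizable_ae
    (fun t => (hY.integrable t).aemeasurable) (ae_exists_tendsto_of_hasUpcrossings hY hbdd l hl)
  obtain ⟨σ, hσ⟩ := l.exists_seq_tendsto
  refine ⟨V, memLp_one_iff_integrable.1 ⟨hV.aestronglyMeasurable, ?_⟩, hlim⟩
  calc eLpNorm V 1 μ
      ≤ liminf (fun n => eLpNorm (Y (σ n)) 1 μ) atTop :=
        Lp.eLpNorm_lim_le_liminf_eLpNorm (fun n => (hY.integrable (σ n)).aestronglyMeasurable) V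
          (hlim.mono fun ω hω => hω.comp hσ)
    _ ≤ R := liminf_le_of_frequently_le' (Frequently.of_forall fun n => hbdd (σ n))
    _ < ∞ := ENNReal.coe_lt_top

lemma exists_integrable_tendsto_atTop [Nonempty ι] [Countable ι] (hY : Submartingale Y ℱ μ)
    (hbdd : ∀ t, eLpNorm (Y t) 1 μ ≤ R) :
    ∃ V : Ω → ℝ, Integrable V μ ∧ ∀ᵐ ω ∂μ, Tendsto (Y · ω) atTop (𝓝 (V ω)) :=
  exists_integrable_tendsto_of_hasUpcrossings hY hbdd atTop fun _ _ _ ha hb k =>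
    (eventually_hasUpcrossings_atTop ha hb k).exists

lemma exists_integrable_tendsto_atBot [Nonempty ι] [Countable ι] (hY : Submartingale Y ℱ μ)
    (hbdd : ∀ t, eLpNorm (Y t) 1 μ ≤ R) :
    ∃ V : Ω → ℝ, Integrable V μ ∧ ∀ᵐ ω ∂μ, Tendsto (Y · ω) atBot (𝓝 (V ω)) :=
  exists_integrable_tendsto_of_hasUpcrossings hY hbdd atBot fun _ _ _ ha hb k =>
    ⟨Classical.arbitrary ι, hasUpcrossings_of_frequently_atBot ha hb k _⟩

lemma eLpNorm_one_le_of_mem_Icc (hY : Submartingale Y ℱ μ) {c r v : ι} (hr : r ∈ Icc c v) :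
    eLpNorm (Y r) 1 μ ≤ (2 * ∫ ω, (Y v ω)⁺ ∂μ - ∫ ω, Y c ω ∂μ).toNNReal := by
  have hmean : ∫ ω, Y c ω ∂μ ≤ ∫ ω, Y r ω ∂μ := by
    simpa only [setIntegral_univ] using hY.setIntegral_le hr.1 MeasurableSet.univ
  have hpos : ∫ ω, (Y r ω)⁺ ∂μ ≤ ∫ ω, (Y v ω)⁺ ∂μ := by
    simpa only [setIntegral_univ, Pi.posPart_apply] using
      hY.pos.setIntegral_le hr.2 MeasurableSet.univ
  have hposint : Integrable (fun ω => (Y r ω)⁺) μ := (hY.integrable r).pos_part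
  have habs (x : ℝ) : ‖x‖ = 2 * x⁺ - x := by
    rw [Real.norm_eq_abs, ← posPart_add_negPart]
    linarith [posPart_sub_negPart x]
  rw [eLpNorm_one_eq_lintegral_enorm, ← ofReal_integral_norm_eq_lintegral_enorm (hY.integrable r)]
  refine ENNReal.ofReal_le_ofReal ?_
  simp only [habs]
  rw [integral_sub (hposint.const_mul 2) (hY.integrable r), integral_const_mul]
  linarith

end Convergence

section ConditionalExpectation

variable {Ω κ : Type*} {m0 : MeasurableSpace Ω} {μ : Measure Ω} {X : Ω → ℝ}

lemma le_condExp_iSup_of_tendsto_atTop [IsFiniteMeasure μ] [Preorder κ] [Nonempty κ]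
    [IsDirectedOrder κ] [(atTop : Filter κ).IsCountablyGenerated] {ℱ : Filtration κ m0}
    {Y : κ → Ω → ℝ} {V : Ω → ℝ} (hle : ∀ t, Y t ≤ᵐ[μ] μ[X | ℱ t])
    (hlim : ∀ᵐ ω ∂μ, Tendsto (Y · ω) atTop (𝓝 (V ω))) : V ≤ᵐ[μ] μ[X | ⨆ t, ℱ t] := by
  obtain ⟨σ, hσ, hσtop⟩ := exists_seq_monotone_tendsto_atTop_atTop κ
  have hsup : ⨆ n, sampledFiltration ℱ hσ n = ⨆ t, ℱ t :=
    Monotone.iSup_comp_tendsto_atTop (fun _ _ h => ℱ.mono h) hσtop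
  filter_upwards [hlim, tendsto_ae_condExp (ℱ := sampledFiltration ℱ hσ) X,
    ae_all_iff.2 fun n => hle (σ n)] with ω hω hlevy hωle
  rw [hsup] at hlevy
  exact le_of_tendsto_of_tendsto' (hω.comp hσtop) hlevy hωle

lemma unifIntegrable_of_ae_norm_le {β γ : Type*} [NormedAddCommGroup β] [NormedAddCommGroup γ]
    {p : ℝ≥0∞} {f : κ → Ω → β} {h : κ → Ω → γ} (hh : UnifIntegrable h p μ)
    (hfh : ∀ i, ∀ᵐ ω ∂μ, ‖f i ω‖ ≤ ‖h i ω‖) : UnifIntegrable f p μ := by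
  intro ε hε
  obtain ⟨δ, hδ, H⟩ := hh hε
  refine ⟨δ, hδ, fun i s hs hμs => (eLpNorm_mono_ae ?_).trans (H i s hs hμs)⟩
  filter_upwards [hfh i] with ω hω
  simpa only [norm_indicator_eq_indicator_norm] using indicator_le_indicator hω

lemma tendsto_integral_posPart_sub_of_ae_le [IsFiniteMeasure μ] {f h : ℕ → Ω → ℝ} {g : Ω → ℝ}
    (hf : ∀ n, Integrable (f n) μ) (hg : Integrable g μ)
    (hh : ∀ n, AEStronglyMeasurable (h n) μ) (hhunif : UnifIntegrable h 1 μ)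
    (hfh : ∀ n, f n ≤ᵐ[μ] h n) (hlim : ∀ᵐ ω ∂μ, Tendsto (f · ω) atTop (𝓝 (g ω))) :
    Tendsto (fun n => ∫ ω, (f n ω - g ω)⁺ ∂μ) atTop (𝓝 0) := by
  have hgunif : UnifIntegrable (fun _ : ℕ => g) 1 μ :=
    unifIntegrable_const le_rfl ENNReal.one_ne_top (memLp_one_iff_integrable.2 hg)
  have hunif : UnifIntegrable (fun n ω => (f n ω - g ω)⁺) 1 μ := by
    refine unifIntegrable_of_ae_norm_le (hhunif.sub hgunif le_rfl hh
      fun _ => hg.aestronglyMeasurable) fun n => ?_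
    filter_upwards [hfh n] with ω hω
    rw [Real.norm_of_nonneg (posPart_nonneg _)]
    exact (posPart_mono (sub_le_sub_right hω _)).trans (sup_le (le_abs_self _) (abs_nonneg _))
  have hpos (n : ℕ) : Integrable (fun ω => (f n ω - g ω)⁺) μ := ((hf n).sub hg).pos_part
  have hlimpos : ∀ᵐ ω ∂μ, Tendsto (fun n => (f n ω - g ω)⁺) atTop (𝓝 0) := by
    filter_upwards [hlim] with ω hω
    simpa only [sub_self, posPart_zero, Function.comp_def] using
      (continuous_posPart.tendsto _).comp (hω.sub_const (g ω))
  have hL1 := tendsto_Lp_finite_of_tendsto_ae le_rfl ENNReal.one_ne_top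
    (fun n => (hpos n).aestronglyMeasurable) MemLp.zero' hunif hlimpos
  have := tendsto_integral_of_L1' _ aestronglyMeasurable_const (Eventually.of_forall hpos) hL1
  simpa only [integral_zero] using this

lemma le_condExp_of_tendsto_integral_posPart_sub [IsFiniteMeasure μ] {m : MeasurableSpace Ω}
    (hm : m ≤ m0) {f : ℕ → Ω → ℝ} {g : Ω → ℝ} (hX : Integrable X μ)
    (hf : ∀ n, Integrable (f n) μ) (hg : Integrable g μ) (hle : ∀ n, X ≤ᵐ[μ] μ[f n | m])
    (hlim : Tendsto (fun n => ∫ ω, (f n ω - g ω)⁺ ∂μ) atTop (𝓝 0)) : X ≤ᵐ[μ] μ[g | m] := by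
  have hbound (n : ℕ) : (fun ω => (X ω - (μ[g | m]) ω)⁺) ≤ᵐ[μ] μ[fun ω => (f n ω - g ω)⁺ | m] := by
    have hpos : Integrable (fun ω => (f n ω - g ω)⁺) μ := ((hf n).sub hg).pos_part
    have hsplit : f n ≤ᵐ[μ] g + fun ω => (f n ω - g ω)⁺ :=
      Eventually.of_forall fun ω => by
        simpa only [Pi.add_apply] using sub_le_iff_le_add'.1 (le_posPart (f n ω - g ω))
    filter_upwards [hle n, condExp_mono (m := m) (hf n) (hg.add hpos) hsplit,
      condExp_add hg hpos m,
      condExp_nonneg (m := m) (Eventually.of_forall fun ω => posPart_nonneg (f n ω - g ω))]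
      with ω hωle hωmono hωadd hωnonneg
    rw [hωadd, Pi.add_apply] at hωmono
    exact sup_le (sub_le_iff_le_add'.2 (hωle.trans hωmono)) hωnonneg
  have hdiff : Integrable (fun ω => (X ω - (μ[g | m]) ω)⁺) μ :=
    (hX.sub integrable_condExp).pos_part
  have hzero : ∫ ω, (X ω - (μ[g | m]) ω)⁺ ∂μ = 0 := by
    refine le_antisymm (ge_of_tendsto' hlim fun n => ?_)
      (integral_nonneg fun ω => posPart_nonneg _)
    exact (integral_mono_ae hdiff integrable_condExp (hbound n)).trans_eq (integral_condExp hm)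
  filter_upwards [(integral_eq_zero_iff_of_nonneg (fun ω => posPart_nonneg _) hdiff).1 hzero]
    with ω hω
  exact sub_nonpos.1 (posPart_eq_zero.1 hω)

lemma le_condExp_of_tendsto_atBot [IsFiniteMeasure μ] [Preorder κ] [Nonempty κ]
    [IsCodirectedOrder κ] [(atBot : Filter κ).IsCountablyGenerated] {ℱ : Filtration κ m0}
    {Y : κ → Ω → ℝ} (hY : Submartingale Y ℱ μ) {m : MeasurableSpace Ω} (hm : m ≤ m0) {V : Ω → ℝ}
    (hX : Integrable X μ) (hV : Integrable V μ) (hle : ∀ t, X ≤ᵐ[μ] μ[Y t | m])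
    (hlim : ∀ᵐ ω ∂μ, Tendsto (Y · ω) atBot (𝓝 (V ω))) : X ≤ᵐ[μ] μ[V | m] := by
  obtain ⟨ρ, hρ, hρbot⟩ := exists_seq_antitone_tendsto_atTop_atBot κ
  have hunif : UnifIntegrable (fun n => μ[Y (ρ 0) | ℱ (ρ n)]) 1 μ :=
    ((hY.integrable (ρ 0)).uniformIntegrable_condExp fun n => ℱ.le (ρ n)).2.1
  refine le_condExp_of_tendsto_integral_posPart_sub hm hX (fun n => hY.integrable (ρ n)) hV
    (fun n => hle (ρ n)) ?_
  exact tendsto_integral_posPart_sub_of_ae_le (fun n => hY.integrable (ρ n)) hV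
    (fun _ => integrable_condExp.aestronglyMeasurable) hunif
    (fun n => hY.ae_le_condExp (hρ (Nat.zero_le n))) (hlim.mono fun ω hω => hω.comp hρbot)

end ConditionalExpectation

section OneSidedLimits

variable {ι : Type*} [LinearOrder ι] [TopologicalSpace ι] [OrderClosedTopology ι] {D : Set ι}
  {u : ι}

lemma nhdsWithin_inter_Iio_le_map_atTop {c : ι} (hc : c ∈ D ∩ Iio u) :
    𝓝[D ∩ Iio u] u ≤ map (↑) (atTop : Filter ↥(D ∩ Ico c u)) := by
  have : Nonempty ↥(D ∩ Ico c u) := ⟨⟨c, hc.1, le_rfl, hc.2⟩⟩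
  intro s hs
  obtain ⟨⟨x, hxD, hcx, hxu⟩, hx⟩ := mem_atTop_sets.1 (mem_map.1 hs)
  filter_upwards [self_mem_nhdsWithin, mem_nhdsWithin_of_mem_nhds (Ioi_mem_nhds hxu)]
    with t ⟨htD, htu⟩ hxt
  exact hx ⟨t, htD, hcx.trans hxt.le, htu⟩ hxt.le

lemma nhdsWithin_inter_Ioi_le_map_atBot {v : ι} (hv : v ∈ D ∩ Ioi u) :
    𝓝[D ∩ Ioi u] u ≤ map (↑) (atBot : Filter ↥(D ∩ Ioc u v)) := by
  have : Nonempty ↥(D ∩ Ioc u v) := ⟨⟨v, hv.1, hv.2, le_rfl⟩⟩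
  intro s hs
  obtain ⟨⟨x, hxD, hux, hxv⟩, hx⟩ := mem_atBot_sets.1 (mem_map.1 hs)
  filter_upwards [self_mem_nhdsWithin, mem_nhdsWithin_of_mem_nhds (Iio_mem_nhds hux)]
    with t ⟨htD, hut⟩ htx
  exact hx ⟨t, htD, hut, htx.le.trans hxv⟩ htx.le

lemma iSup_inter_Ico_eq_iSup_Iio {α : Type*} [CompleteLattice α] [(𝓝[D ∩ Iio u] u).NeBot]
    {f : ι → α} (hf : Monotone f) {c : ι} (hcu : c < u) :
    ⨆ t : ↥(D ∩ Ico c u), f t = ⨆ s : {s // s < u}, f s := by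
  refine le_antisymm (iSup_le fun t => le_iSup_of_le ⟨t, t.2.2.2⟩ le_rfl) (iSup_le fun s => ?_)
  obtain ⟨t, ⟨htD, htu⟩, hst⟩ : ∃ t, t ∈ D ∩ Iio u ∧ max s.1 c < t :=
    ((eventually_mem_nhdsWithin (a := u)).and <| mem_nhdsWithin_of_mem_nhds <|
      Ioi_mem_nhds <| max_lt s.2 hcu).exists
  have hst' := max_lt_iff.1 hst
  exact le_iSup_of_le ⟨t, htD, hst'.2.le, htu⟩ (hf hst'.1.le)

variable {Ω : Type*} {m0 : MeasurableSpace Ω} {μ : Measure Ω} [IsFiniteMeasure μ]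
  {ℱ : Filtration ι m0} {Y : ι → Ω → ℝ}

theorem exists_left_limit_le_condExp (hY : Submartingale Y ℱ μ) (hD : D.Countable)
    [hleft : (𝓝[D ∩ Iio u] u).NeBot] :
    ∃ V : Ω → ℝ, Integrable V μ ∧
      (∀ᵐ ω ∂μ, Tendsto (fun r => Y r ω) (𝓝[D ∩ Iio u] u) (𝓝 (V ω))) ∧
      V ≤ᵐ[μ] μ[Y u | ⨆ s : {s // s < u}, ℱ s] := by
  obtain ⟨c, hc⟩ := hleft.nonempty_of_mem self_mem_nhdsWithin
  have : Nonempty ↥(D ∩ Ico c u) := ⟨⟨c, hc.1, le_rfl, hc.2⟩⟩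
  have : Countable ↥(D ∩ Ico c u) := (hD.mono inter_subset_left).to_subtype
  obtain ⟨V, hV, hlim⟩ := exists_integrable_tendsto_atTop
    (submartingale_comp_monotone hY (Subtype.mono_coe (· ∈ D ∩ Ico c u)))
    fun t => eLpNorm_one_le_of_mem_Icc hY ⟨t.2.2.1, t.2.2.2.le⟩
  refine ⟨V, hV, hlim.mono fun ω hω =>
    (tendsto_map'_iff.2 hω).mono_left (nhdsWithin_inter_Iio_le_map_atTop hc), ?_⟩
  rw [← iSup_inter_Ico_eq_iSup_Iio (D := D) (fun _ _ h => ℱ.mono h) hc.2]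
  exact le_condExp_iSup_of_tendsto_atTop
    (ℱ := sampledFiltration ℱ (Subtype.mono_coe (· ∈ D ∩ Ico c u)))
    (fun t => hY.ae_le_condExp t.2.2.2.le) hlim

theorem exists_right_limit_le_condExp (hY : Submartingale Y ℱ μ) (hD : D.Countable)
    [hright : (𝓝[D ∩ Ioi u] u).NeBot] :
    ∃ V : Ω → ℝ, Integrable V μ ∧
      (∀ᵐ ω ∂μ, Tendsto (fun r => Y r ω) (𝓝[D ∩ Ioi u] u) (𝓝 (V ω))) ∧ Y u ≤ᵐ[μ] μ[V | ℱ u] := by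
  obtain ⟨v, hv⟩ := hright.nonempty_of_mem self_mem_nhdsWithin
  have : Nonempty ↥(D ∩ Ioc u v) := ⟨⟨v, hv.1, hv.2, le_rfl⟩⟩
  have : Countable ↥(D ∩ Ioc u v) := (hD.mono inter_subset_left).to_subtype
  have hYT := submartingale_comp_monotone hY (Subtype.mono_coe (· ∈ D ∩ Ioc u v))
  obtain ⟨V, hV, hlim⟩ := exists_integrable_tendsto_atBot hYT
    fun t => eLpNorm_one_le_of_mem_Icc hY ⟨t.2.2.1.le, t.2.2.2⟩
  exact ⟨V, hV, hlim.mono fun ω hω =>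
    (tendsto_map'_iff.2 hω).mono_left (nhdsWithin_inter_Ioi_le_map_atBot hv),
    le_condExp_of_tendsto_atBot hYT (ℱ.le u) (hY.integrable u) hV
      (fun t => hY.ae_le_condExp t.2.2.1.le) hlim⟩

end OneSidedLimits

lemma neBot_nhdsWithin_inter_of_dense {α : Type*} [TopologicalSpace α] {D U : Set α}
    (hD : Dense D) (hU : IsOpen U) {u : α} (hu : u ∈ closure U) : (𝓝[D ∩ U] u).NeBot := by
  rw [← mem_closure_iff_nhdsWithin_neBot, inter_comm]
  exact closure_minimal (hD.open_subset_closure_inter hU) isClosed_closure hu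

theorem submartingale_one_sided_limits_general {Ω ι : Type*} [LinearOrder ι] [TopologicalSpace ι]
    [OrderClosedTopology ι] {m0 : MeasurableSpace Ω} {μ : Measure Ω} [IsFiniteMeasure μ]
    (ℱ : Filtration ι m0) (Y : ι → Ω → ℝ) (hY : Submartingale Y ℱ μ) (u : ι) (D : Set ι)
    (hDcount : D.Countable) [(𝓝[D ∩ Ioi u] u).NeBot] [(𝓝[D ∩ Iio u] u).NeBot] :
    ∃ V V' : Ω → ℝ, Integrable V μ ∧ Integrable V' μ ∧
      (∀ᵐ ω ∂μ, Tendsto (fun r => Y r ω) (𝓝[D ∩ Ioi u] u) (𝓝 (V ω))) ∧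
      (∀ᵐ ω ∂μ, Tendsto (fun r => Y r ω) (𝓝[D ∩ Iio u] u) (𝓝 (V' ω))) ∧
      Y u ≤ᵐ[μ] μ[V | ℱ u] ∧
      V' ≤ᵐ[μ] μ[Y u | ⨆ s : {s // s < u}, ℱ s] := by
  obtain ⟨V, hV, hVlim, hVle⟩ := exists_right_limit_le_condExp hY hDcount (u := u)
  obtain ⟨V', hV', hV'lim, hV'le⟩ := exists_left_limit_le_condExp hY hDcount (u := u)
  exact ⟨V, V', hV, hV', hVlim, hV'lim, hVle, hV'le⟩

/-- One-sided a.s. limits of an integrable submartingale along a countable dense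
set D at a point u, with V = lim_{r↓u} Y_r satisfying E[V | F_u] ≥ Y_u and
V' = lim_{r↑u} Y_r satisfying E[Y_u | F_{u−}] ≥ V'. -/
theorem submartingale_one_sided_limits
    {Ω : Type*} {m0 : MeasurableSpace Ω} {μ : Measure Ω} [IsProbabilityMeasure μ]
    (ℱ : Filtration ℝ m0) (Y : ℝ → Ω → ℝ) (hY : Submartingale Y ℱ μ)
    (u : ℝ) (D : Set ℝ) (hDcount : D.Countable) (hDdense : Dense D) :
    ∃ V V' : Ω → ℝ, Integrable V μ ∧ Integrable V' μ ∧
      (∀ᵐ ω ∂μ, Tendsto (fun r : ℝ => Y r ω) (nhdsWithin u (D ∩ Set.Ioi u)) (nhds (V ω))) ∧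
      (∀ᵐ ω ∂μ, Tendsto (fun r : ℝ => Y r ω) (nhdsWithin u (D ∩ Set.Iio u)) (nhds (V' ω))) ∧
      Y u ≤ᵐ[μ] μ[V | ℱ u] ∧
      V' ≤ᵐ[μ] μ[Y u | ⨆ s : {s : ℝ // s < u}, ℱ s.1] := by
  have : (𝓝[D ∩ Ioi u] u).NeBot := neBot_nhdsWithin_inter_of_dense hDdense isOpen_Ioi (by simp)
  have : (𝓝[D ∩ Iio u] u).NeBot := neBot_nhdsWithin_inter_of_dense hDdense isOpen_Iio (by simp)
  exact submartingale_one_sided_limits_general ℱ Y hY u D hDcount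
end
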